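/- For every n ≥ 0 and generic tuples ū, v̄ of length n, the scalar product of Bethe vectors has the Izergin–Korepin form ⟨0|( t_{21}(ū) t_{12}(v̄) |0⟩ ) = Σ λ_2(ū_I)·λ_2(v̄_II)·λ_1(ū_II)·λ_1(v̄_I)·K_{n_2}(v̄_II | ū_II)·\bar{K}_{n_1}(v̄_I | ū_I)·f(ū_I, ū_II)·f(v̄_II, v̄_I), where the sum runs over all pairs of partitions ū ⇒ {ū_I, ū_II} and v̄ ⇒ {v̄_I, v̄_II} with #ū_I = #v̄_I = n_1 (hence #ū_II = #v̄_II = n_2 = n − n_1), for n_1 = 0, 1, …, n. -/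

import Mathlib

open scoped BigOperators

noncomputable section

/-- The rational function `g(u,v) = c/(u-v)`. -/
def gC (c u v : ℂ) : ℂ := c / (u - v)

/-- The rational function `f(u,v) = (u-v+c)/(u-v)`. -/
def fC (c u v : ℂ) : ℂ := (u - v + c) / (u - v)

/-- The rational function `h(u,v) = (u-v+c)/c`. -/
def hC (c u v : ℂ) : ℂ := (u - v + c) / c

/-- A family of parameters is generic if all pairwise differences avoid `0, ±c, ±2c`. -/
def Generic (c : ℂ) {ι : Type*} (w : ι → ℂ) : Prop :=
  ∀ i j, i ≠ j → w i - w j ≠ 0 ∧ w i - w j ≠ c ∧ w i - w j ≠ -c ∧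
    w i - w j ≠ 2 * c ∧ w i - w j ≠ -2 * c

/-- The modified Izergin determinant `K^{(z)}(x̄|ȳ)`. -/
def KIz (c z : ℂ) {ι κ : Type*} [Fintype ι] [Fintype κ] [DecidableEq κ]
    (x : ι → ℂ) (y : κ → ℂ) : ℂ :=
  Matrix.det (Matrix.of fun j k : κ =>
    -z * (if j = k then 1 else 0) +
      (∏ i, fC c (x i) (y j)) * (∏ i ∈ Finset.univ.erase j, fC c (y j) (y i))
        / hC c (y j) (y k))

/-- The conjugated modified Izergin determinant: `c` is replaced by `-c`. -/
def KIzBar (c z : ℂ) {ι κ : Type*} [Fintype ι] [Fintype κ] [DecidableEq κ]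
    (x : ι → ℂ) (y : κ → ℂ) : ℂ :=
  KIz (-c) z x y

/-- Restriction of a tuple to a subtuple indexed by a `Finset`. -/
def restr {p : ℕ} (w : Fin p → ℂ) (s : Finset (Fin p)) : {x // x ∈ s} → ℂ :=
  fun i => w i.1

/-- Double product `f(w̄_s, w̄_t)` over two subtuples of a tuple. -/
def fSS (c : ℂ) {p : ℕ} (w : Fin p → ℂ) (s t : Finset (Fin p)) : ℂ :=
  ∏ i ∈ s, ∏ j ∈ t, fC c (w i) (w j)

/-- Ordered product of operators over a subtuple (the operators pairwise commute,
so the order is irrelevant). -/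
def opProd {V : Type*} [AddCommGroup V] [Module ℂ V] {p : ℕ}
    (op : ℂ → Module.End ℂ V) (w : Fin p → ℂ) (s : Finset (Fin p)) : Module.End ℂ V :=
  ((s.sort (· ≤ ·)).map (fun i => op (w i))).prod

/-- The index subsets of a partition of `Fin p` into three parts. -/
def parts {p : ℕ} (σ : Fin p → Fin 3) (k : Fin 3) : Finset (Fin p) :=
  Finset.univ.filter (fun i => σ i = k)

/-! Commuting `t₂₁(u)` through `t₁₂(v̄)` and writing `E = {u, v̄}`, one obtains the sum over all
pairs `a ≠ b` in `E` of `λ₂(a) λ₁(b) t₁₂(E ∖ {a, b})|0⟩`, with a coefficient that factorizes; since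
`a` and `b` may be equal to `u`, no distinction between wanted and unwanted terms is needed.
Removing the parameters of `ū` one by one gives a recursion for the scalar product.

The Izergin–Korepin sum satisfies the same recursion. For a fixed product of values of `λ₁` and
`λ₂`, the double sum over `a` and `b` splits into two single sums, which expand the determinants `K`
and `K̄` along the additional parameter `u`. To prove this expansion, write a determinant as a sum
of principal minors. These are Cauchy determinants, hence products of functions `1 / f`, and the
claim becomes a partial fraction identity in `u`. -/

section RationalFunctions

variable (c x y : ℂ)

theorem gC_neg : gC (-c) x y = gC c y x := by
  rw [gC, gC, ← neg_sub y x, neg_div_neg_eq]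

theorem fC_neg : fC (-c) x y = fC c y x := by
  rw [fC, fC, ← neg_div_neg_eq]
  congr 1 <;> ring

theorem hC_neg : hC (-c) x y = hC c y x := by
  rw [hC, hC, ← neg_div_neg_eq]
  congr 1 <;> ring

-- This also holds at `x = y`, where both sides are `0`: division by zero makes `fC c x x = 0`,
-- and `1 / f` does vanish at the pole of `f`. Sums over `E ∖ {v}` are extended to `E` this way.
theorem inv_fC : (fC c x y)⁻¹ = (x - y) / (x - y + c) := inv_div _ _

theorem inv_fC_self : (fC c x x)⁻¹ = 0 := by simp [inv_fC]

theorem inv_hC : (hC c x y)⁻¹ = c / (x - y + c) := inv_div _ _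

variable {c x y}

theorem fC_eq_one_add_gC (h : x ≠ y) : fC c x y = 1 + gC c x y := by
  rw [fC, gC, add_div, div_self (sub_ne_zero.2 h)]

end RationalFunctions

section PartialFractions

theorem prod_sub_add_div_sub {K ι : Type*} [Field K] [DecidableEq ι] (p e : ι → K) {I : Finset ι}
    (hp : Set.InjOn p I) {t : K} (ht : ∀ i ∈ I, p i ≠ t) :
    ∏ i ∈ I, (p i - t + e i) / (p i - t) =
      1 + ∑ i ∈ I, e i / (p i - t) * ∏ j ∈ I.erase i, (p j - p i + e j) / (p j - p i) := by
  induction I using Finset.induction_on generalizing t with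
  | empty => simp
  | insert k I hk ih =>
    have hpI : Set.InjOn p I := hp.mono (Finset.coe_subset.2 (Finset.subset_insert k I))
    have hne : ∀ i ∈ I, p i ≠ p k := fun i hi h =>
      hk (hp (Finset.mem_insert_of_mem hi) (Finset.mem_insert_self k I) h ▸ hi)
    have htI : ∀ i ∈ I, p i ≠ t := fun i hi => ht i (Finset.mem_insert_of_mem hi)
    have hkt : p k - t ≠ 0 := sub_ne_zero.2 (ht k (Finset.mem_insert_self k I))
    have herase : ∀ i ∈ I, (insert k I).erase i = insert k (I.erase i) := fun i hi =>
      Finset.erase_insert_of_ne fun h => hk (h ▸ hi)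
    rw [Finset.prod_insert hk, Finset.sum_insert hk, Finset.erase_insert hk, ih hpI htI,
      ih hpI hne, mul_add, mul_add, Finset.mul_sum, Finset.mul_sum, ← add_assoc, add_assoc,
      add_assoc, ← add_assoc, ← Finset.sum_add_distrib]
    congr 1
    · rw [add_div, div_self hkt]
      ring
    · refine Finset.sum_congr rfl fun i hi => ?_
      have hit : p i - t ≠ 0 := sub_ne_zero.2 (htI i hi)
      have hik : p i - p k ≠ 0 := sub_ne_zero.2 (hne i hi)
      have hki : p k - p i ≠ 0 := sub_ne_zero.2 (hne i hi).symm
      rw [herase i hi, Finset.prod_insert (by simp [hk])]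
      field_simp
      ring

end PartialFractions

/-- A weak form of `Generic`: no `f` or `1 / f` evaluated on two distinct entries has a pole. The
case `i = j` of the second field says `c ≠ 0`. -/
structure Admissible (c : ℂ) {ι : Type*} (w : ι → ℂ) : Prop where
  injective : Function.Injective w
  sub_add_ne_zero : ∀ i j, w i - w j + c ≠ 0

section Admissible

variable {c : ℂ} {ι : Type*} {w : ι → ℂ}

theorem Generic.admissible (hc : c ≠ 0) (hw : Generic c w) : Admissible c w where
  injective i j h := by
    by_contra hij
    exact (hw i j hij).1 (sub_eq_zero.2 h)
  sub_add_ne_zero i j h := by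
    rcases eq_or_ne i j with rfl | hij
    · exact hc (by simpa using h)
    · exact (hw i j hij).2.2.1 (eq_neg_of_add_eq_zero_left h)

theorem Admissible.comp {κ : Type*} (hw : Admissible c w) {e : κ → ι}
    (he : Function.Injective e) : Admissible c (w ∘ e) :=
  ⟨hw.injective.comp he, fun _ _ => hw.sub_add_ne_zero _ _⟩

theorem Admissible.sumElim {n m : ℕ} {u : Fin n → ℂ} {v : Fin m → ℂ}
    (hw : Admissible c (Fin.append u v)) : Admissible c (Sum.elim u v) :=
  Fin.append_comp_sumElim (xs := u) (ys := v) ▸ hw.comp finSumFinEquiv.injective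

theorem Admissible.sub_ne_zero (hw : Admissible c w) {i j : ι} (h : i ≠ j) : w i - w j ≠ 0 :=
  _root_.sub_ne_zero.2 (hw.injective.ne h)

theorem Admissible.neg (hw : Admissible c w) : Admissible (-c) w :=
  ⟨hw.injective, fun i j h => hw.sub_add_ne_zero j i (by linear_combination -h)⟩

theorem Admissible.fC_ne_zero (hw : Admissible c w) {i j : ι} (h : i ≠ j) :
    fC c (w i) (w j) ≠ 0 :=
  div_ne_zero (hw.sub_add_ne_zero i j) (hw.sub_ne_zero h)

end Admissible

/-- The double product `f(w̄_s, w̄_t)`; `fSS` is the case `ι = Fin p`. -/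
def fProd (c : ℂ) {ι : Type*} (w : ι → ℂ) (s t : Finset ι) : ℂ :=
  ∏ i ∈ s, ∏ j ∈ t, fC c (w i) (w j)

section FProd

variable {c : ℂ} {ι : Type*} {w : ι → ℂ} {s s' t t' : Finset ι} {a : ι}

theorem Admissible.fProd_ne_zero (hw : Admissible c w) (h : Disjoint s t) : fProd c w s t ≠ 0 :=
  Finset.prod_ne_zero_iff.2 fun _ hi => Finset.prod_ne_zero_iff.2 fun _ hj =>
    hw.fC_ne_zero (Finset.disjoint_left.1 h hi <| · ▸ hj)

theorem fProd_neg : fProd (-c) w s t = fProd c w t s := by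
  simp only [fProd, fC_neg]
  exact Finset.prod_comm

theorem fProd_singleton (i j : ι) : fProd c w {i} {j} = fC c (w i) (w j) := by
  simp [fProd]

variable [DecidableEq ι]

theorem fProd_union_left (h : Disjoint s s') :
    fProd c w (s ∪ s') t = fProd c w s t * fProd c w s' t :=
  Finset.prod_union h

theorem fProd_union_right (h : Disjoint t t') :
    fProd c w s (t ∪ t') = fProd c w s t * fProd c w s t' := by
  simp only [fProd, Finset.prod_union h, Finset.prod_mul_distrib]

theorem fProd_insert_left (h : a ∉ s) :
    fProd c w (insert a s) t = fProd c w {a} t * fProd c w s t :=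
  fProd_union_left (Finset.disjoint_singleton_left.2 h)

theorem fProd_insert_right (h : a ∉ t) :
    fProd c w s (insert a t) = fProd c w s {a} * fProd c w s t :=
  fProd_union_right (Finset.disjoint_singleton_left.2 h)

theorem fProd_mul_erase_left (h : a ∈ s) :
    fProd c w {a} t * fProd c w (s.erase a) t = fProd c w s t := by
  rw [← fProd_insert_left (Finset.notMem_erase a s), Finset.insert_erase h]

theorem fProd_mul_erase_right (h : a ∈ t) :
    fProd c w s {a} * fProd c w s (t.erase a) = fProd c w s t := by
  rw [← fProd_insert_right (Finset.notMem_erase a t), Finset.insert_erase h]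

theorem erase_disjSum_inl {α : Type*} [DecidableEq α] (s : Finset α) (t : Finset ι) (a : α) :
    (s.disjSum t).erase (Sum.inl a) = (s.erase a).disjSum t := by
  ext (i | i) <;> simp

theorem erase_disjSum_inr {α : Type*} [DecidableEq α] (s : Finset α) (t : Finset ι) (a : ι) :
    (s.disjSum t).erase (Sum.inr a) = s.disjSum (t.erase a) := by
  ext (i | i) <;> simp

-- The partial fraction expansion in `w u`, whose poles are the `w a + c` (`a ∈ x`) and the `w s`.
theorem inv_fProd_mul_fProd_eq (hw : Admissible c w) (x : Finset ι) {S : Finset ι} {u : ι}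
    (hu : u ∉ S) :
    (fProd c w x {u})⁻¹ * fProd c w S {u} =
      1 - ∑ a ∈ x, fProd c w {a} (x.erase a) * (fProd c w {a} S)⁻¹ * (hC c (w a) (w u))⁻¹
        + ∑ s ∈ S, (fProd c w x {s})⁻¹ * fProd c w (S.erase s) {s} * gC c (w s) (w u) := by
  have hne : ∀ a s, w a + c ≠ w s := fun a s h =>
    hw.sub_add_ne_zero a s (by linear_combination h)
  have hinj : Set.InjOn (Sum.elim (fun a => w a + c) w) (x.disjSum S) :=
    (Function.Injective.sumElim ((add_left_injective c).comp hw.injective) hw.injective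
      hne).injOn
  have hpole : ∀ i ∈ x.disjSum S, Sum.elim (fun a => w a + c) w i ≠ w u := by
    rintro (a | s) hi
    · exact hne a u
    · exact hw.injective.ne fun h => hu (h ▸ Finset.inr_mem_disjSum.1 hi)
  have hfinv : ∀ a b, (w a + c - w b + -c) / (w a + c - w b) = (fC c (w a) (w b))⁻¹ :=
    fun a b => by rw [inv_fC]; congr 1 <;> ring
  have hf : ∀ a b, (w b + c - (w a + c) + -c) / (w b + c - (w a + c)) = fC c (w a) (w b) :=
    fun a b => by rw [fC, ← neg_div_neg_eq]; congr 1 <;> ring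
  have hfinv' : ∀ a b, (w b - (w a + c) + c) / (w b - (w a + c)) = (fC c (w a) (w b))⁻¹ :=
    fun a b => by rw [inv_fC, ← neg_div_neg_eq]; congr 1 <;> ring
  have hh : ∀ a, -c / (w a + c - w u) = -(hC c (w a) (w u))⁻¹ := fun a => by
    rw [inv_hC, neg_div]
    congr 2
    ring
  have key := prod_sub_add_div_sub _ (Sum.elim (fun _ => -c) fun _ => c) hinj hpole
  simp only [Finset.prod_disjSum, Finset.sum_disjSum, erase_disjSum_inl, erase_disjSum_inr,
    Sum.elim_inl, Sum.elim_inr, hfinv, hf, hfinv', hh, Finset.prod_inv_distrib] at key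
  simp only [fProd, Finset.prod_singleton]
  rw [sub_eq_add_neg, ← Finset.sum_neg_distrib, add_assoc]
  refine key.trans ?_
  congr 2
  · refine Finset.sum_congr rfl fun a _ => by ring
  · refine Finset.sum_congr rfl fun s _ => ?_
    simp only [gC, fC]
    ring

end FProd

/-- The summand of `izerginSum`: the contribution of the principal minor indexed by `S ⊆ y`. -/
def izerginTerm (c : ℂ) {ι : Type*} [DecidableEq ι] (w : ι → ℂ) (x y S : Finset ι) : ℂ :=
  (-1) ^ (y \ S).card * fProd c w x S * fProd c w S (y \ S)

/-- The Izergin determinant `K(w̄_x|w̄_y)` of two subtuples of `w`, expanded into a sum over the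
partitions of `w̄_y`; see `KIz_comp_embedding`. -/
def izerginSum (c : ℂ) {ι : Type*} [DecidableEq ι] (w : ι → ℂ) (x y : Finset ι) : ℂ :=
  ∑ S ∈ y.powerset, izerginTerm c w x y S

/-- The expansion `∑ₐ K(x̄ₐ|ȳ) f(xₐ, x̄ₐ) / h(xₐ, u)` along an additional parameter `u`, which is
a multiple of `K(x̄|{u, ȳ})` if `u` is not in `x̄`, and of `K(x̄ ∖ u|ȳ)` if it is. -/
def izerginExpansion (c : ℂ) {ι : Type*} [DecidableEq ι] (w : ι → ℂ) (x y : Finset ι) (u : ι) : ℂ :=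
  ∑ a ∈ x, izerginSum c w (x.erase a) y * fProd c w {a} (x.erase a) * (hC c (w a) (w u))⁻¹

section IzerginSum

theorem sum_powerset_sum_mem {ι M : Type*} [DecidableEq ι] [AddCommMonoid M] (y : Finset ι)
    (Φ : Finset ι → ι → M) :
    ∑ S ∈ y.powerset, ∑ s ∈ S, Φ S s = ∑ S ∈ y.powerset, ∑ s ∈ y \ S, Φ (insert s S) s := by
  rw [Finset.sum_sigma', Finset.sum_sigma']
  refine Finset.sum_bij' (fun p _ => ⟨p.1.erase p.2, p.2⟩) (fun p _ => ⟨insert p.2 p.1, p.2⟩)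
    ?_ ?_ ?_ ?_ ?_ <;>
  rintro ⟨S, s⟩ h <;>
  simp only [Finset.mem_sigma, Finset.mem_powerset, Finset.mem_sdiff] at h ⊢
  · exact ⟨(Finset.erase_subset s S).trans h.1, h.1 h.2, Finset.notMem_erase s S⟩
  · exact ⟨Finset.insert_subset h.2.1 h.1, Finset.mem_insert_self s S⟩
  · rw [Finset.insert_erase h.2]
  · rw [Finset.erase_insert h.2.2]
  · rw [Finset.insert_erase h.2]

variable {c : ℂ} {ι : Type*} [DecidableEq ι] {w : ι → ℂ} {x y S : Finset ι} {u s : ι}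

theorem sum_fProd_erase_mul_gC (hw : Admissible c w) {Z : Finset ι} (hu : u ∉ Z) :
    ∑ s ∈ Z, fProd c w {s} (Z.erase s) * gC c (w s) (w u) = 1 - fProd c w {u} Z := by
  have key := inv_fProd_mul_fProd_eq hw.neg ∅ hu
  have hg : ∀ s, gC (-c) (w s) (w u) = -gC c (w s) (w u) := fun s => by rw [gC, gC, neg_div]
  simp only [fProd_neg, hg, mul_neg, Finset.sum_neg_distrib, Finset.sum_empty, sub_zero] at key
  simp only [fProd, Finset.prod_empty, Finset.prod_const_one, inv_one, one_mul] at key ⊢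
  linear_combination key

theorem izerginTerm_erase (hw : Admissible c w) {a : ι} (ha : a ∈ x) (haS : a ∉ S) :
    izerginTerm c w (x.erase a) y S = izerginTerm c w x y S * (fProd c w {a} S)⁻¹ := by
  have h : fProd c w {a} S ≠ 0 := hw.fProd_ne_zero (Finset.disjoint_singleton_left.2 haS)
  rw [izerginTerm, izerginTerm, ← fProd_mul_erase_left ha]
  field_simp

theorem izerginTerm_insert_mul (hw : Admissible c w) (hsx : s ∉ x) (hsS : s ∉ S) (hsy : s ∈ y) :
    izerginTerm c w x y (insert s S) * ((fProd c w x {s})⁻¹ * fProd c w S {s}) =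
      -(izerginTerm c w x y S * fProd c w {s} ((y \ S).erase s)) := by
  have h : fProd c w x {s} ≠ 0 := hw.fProd_ne_zero (Finset.disjoint_singleton_right.2 hsx)
  have hs : s ∈ y \ S := Finset.mem_sdiff.2 ⟨hsy, hsS⟩
  have hyS : y \ insert s S = (y \ S).erase s := by grind
  rw [izerginTerm, izerginTerm, hyS, fProd_insert_right hsS, fProd_insert_left hsS,
    ← fProd_mul_erase_right (s := S) hs, ← Finset.card_erase_add_one hs, pow_succ]
  field_simp

theorem sum_izerginTerm_mul_sum (hw : Admissible c w) (hxy : Disjoint x y) (hu : u ∉ y) :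
    ∑ S ∈ y.powerset, izerginTerm c w x y S *
        ∑ s ∈ S, (fProd c w x {s})⁻¹ * fProd c w (S.erase s) {s} * gC c (w s) (w u) =
      ∑ S ∈ y.powerset, izerginTerm c w x y S * (fProd c w {u} (y \ S) - 1) := by
  simp only [Finset.mul_sum]
  rw [sum_powerset_sum_mem]
  refine Finset.sum_congr rfl fun S _ => ?_
  rw [← neg_sub, ← sum_fProd_erase_mul_gC hw (fun h => hu (Finset.mem_sdiff.1 h).1), mul_neg,
    Finset.mul_sum, ← Finset.sum_neg_distrib]
  refine Finset.sum_congr rfl fun s hs => ?_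
  obtain ⟨hsy, hsS⟩ := Finset.mem_sdiff.1 hs
  rw [Finset.erase_insert hsS, ← mul_assoc,
    izerginTerm_insert_mul hw (Finset.disjoint_right.1 hxy hsy) hsS hsy, neg_mul, mul_assoc]

theorem izerginExpansion_eq (hw : Admissible c w) (hxy : Disjoint x y) (hu : u ∉ y) :
    izerginExpansion c w x y u = ∑ S ∈ y.powerset, izerginTerm c w x y S *
      (fProd c w {u} (y \ S) - (fProd c w x {u})⁻¹ * fProd c w S {u}) := by
  have hexp : izerginExpansion c w x y u = ∑ S ∈ y.powerset, izerginTerm c w x y S *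
      ∑ a ∈ x, fProd c w {a} (x.erase a) * (fProd c w {a} S)⁻¹ * (hC c (w a) (w u))⁻¹ := by
    simp only [izerginExpansion, izerginSum, Finset.sum_mul, Finset.mul_sum]
    rw [Finset.sum_comm]
    refine Finset.sum_congr rfl fun S hS => Finset.sum_congr rfl fun a ha => ?_
    rw [izerginTerm_erase hw ha fun h =>
      Finset.disjoint_left.1 hxy ha (Finset.mem_powerset.1 hS h)]
    ring
  have hpf : ∀ S ∈ y.powerset,
      ∑ a ∈ x, fProd c w {a} (x.erase a) * (fProd c w {a} S)⁻¹ * (hC c (w a) (w u))⁻¹ =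
        ∑ s ∈ S, (fProd c w x {s})⁻¹ * fProd c w (S.erase s) {s} * gC c (w s) (w u) +
          (1 - (fProd c w x {u})⁻¹ * fProd c w S {u}) := fun S hS => by
    linear_combination inv_fProd_mul_fProd_eq hw x fun h => hu (Finset.mem_powerset.1 hS h)
  rw [hexp, Finset.sum_congr rfl fun S hS => by rw [hpf S hS, mul_add],
    Finset.sum_add_distrib, sum_izerginTerm_mul_sum hw hxy hu, ← Finset.sum_add_distrib]
  exact Finset.sum_congr rfl fun S _ => by ring

theorem fProd_mul_izerginExpansion (hw : Admissible c w) (hxy : Disjoint x y) (hux : u ∉ x)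
    (huy : u ∉ y) :
    fProd c w x {u} * izerginExpansion c w x y u = izerginSum c w x (insert u y) := by
  have hne : fProd c w x {u} ≠ 0 := hw.fProd_ne_zero (Finset.disjoint_singleton_right.2 hux)
  rw [izerginExpansion_eq hw hxy huy, izerginSum, Finset.sum_powerset_insert huy,
    ← Finset.sum_add_distrib, Finset.mul_sum]
  refine Finset.sum_congr rfl fun S hS => ?_
  have huS : u ∉ S := fun h => huy (Finset.mem_powerset.1 hS h)
  have huyS : u ∉ y \ S := fun h => huy (Finset.mem_sdiff.1 h).1
  rw [izerginTerm, izerginTerm, izerginTerm, Finset.insert_sdiff_of_notMem _ huS,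
    Finset.insert_sdiff_insert, Finset.sdiff_insert_of_notMem huy, fProd_insert_right huS,
    fProd_insert_right huyS, fProd_insert_left huS, Finset.card_insert_of_notMem huyS, pow_succ]
  field_simp
  ring

theorem izerginExpansion_of_mem (hw : Admissible c w) (hxy : Disjoint x y) (hu : u ∈ x) :
    izerginExpansion c w x y u = fProd c w {u} y * izerginSum c w (x.erase u) y := by
  have huy : u ∉ y := Finset.disjoint_left.1 hxy hu
  have hzero : (fProd c w x {u})⁻¹ = 0 := by
    rw [← fProd_mul_erase_left hu, fProd_singleton, mul_inv, inv_fC_self, zero_mul]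
  rw [izerginExpansion_eq hw hxy huy, izerginSum, Finset.mul_sum]
  refine Finset.sum_congr rfl fun S hS => ?_
  have hSy : S ⊆ y := Finset.mem_powerset.1 hS
  have huS : u ∉ S := fun h => huy (hSy h)
  have hne : fProd c w {u} S ≠ 0 := hw.fProd_ne_zero (Finset.disjoint_singleton_left.2 huS)
  rw [hzero, izerginTerm_erase hw hu huS, ← Finset.union_sdiff_of_subset hSy,
    fProd_union_right Finset.disjoint_sdiff, Finset.union_sdiff_of_subset hSy]
  field_simp
  ring

end IzerginSum

section Determinants

open Matrix

theorem det_add_diagonal {κ R : Type*} [Fintype κ] [DecidableEq κ] [CommRing R]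
    (M : Matrix κ κ R) (d : κ → R) :
    (M + diagonal d).det =
      ∑ S : Finset κ, (∏ i ∈ Sᶜ, d i) * (M.submatrix ((↑) : S → κ) (↑)).det := by
  have hdiag : (diagonal d).row = fun i => d i • (1 : Matrix κ κ R).row i := by
    ext i j
    simp [row, one_apply, diagonal_apply]
  calc (M + diagonal d).det
      = ∑ S : Finset κ, detRowAlternating (S.piecewise M.row (diagonal d).row) :=
        detRowAlternating.toMultilinearMap.map_add_univ M.row (diagonal d).row
    _ = _ := Finset.sum_congr rfl fun S _ => by
      have hS : S.piecewise M.row (diagonal d).row = Sᶜ.piecewise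
          (fun i => d i • S.piecewise M.row (1 : Matrix κ κ R).row i)
          (S.piecewise M.row (1 : Matrix κ κ R).row) := by
        ext i : 1
        by_cases hi : i ∈ S <;> simp [hi, hdiag]
      rw [hS]
      refine (detRowAlternating.toMultilinearMap.map_piecewise_smul d _ Sᶜ).trans ?_
      rw [smul_eq_mul, ← det_piecewise_one_eq_submatrix_det]
      rfl

theorem det_insert_of_apply_self_eq_one {ι R : Type*} [DecidableEq ι] [CommRing R]
    (M : ι → ι → R) {S : Finset ι} {a : ι} (ha : a ∉ S) (haa : M a a = 1) :
    (of fun j k : (insert a S : Finset ι) => M j k).det =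
      (of fun j k : S => M j k - M j a * M a k).det := by
  let e := (Finset.subtypeInsertEquivOption ha).trans (Equiv.optionEquivSumPUnit.{0} S)
  have hblocks : (of fun j k : (insert a S : Finset ι) => M j k).submatrix e.symm e.symm =
      fromBlocks (of fun j k : S => M j k) (of fun (j : S) (_ : PUnit) => M j a)
        (of fun (_ : PUnit) (k : S) => M a k) 1 := by
    ext (j | j) (k | k) <;>
    simp [e, Finset.subtypeInsertEquivOption, haa]
  rw [← det_submatrix_equiv_self e.symm, hblocks, det_fromBlocks_one₂₂]
  congr 1
  ext j k
  simp [mul_apply]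

theorem prod_prod_erase_insert {ι M : Type*} [DecidableEq ι] [CommMonoid M] (F : ι → ι → M)
    {S : Finset ι} {a : ι} (ha : a ∉ S) :
    ∏ j ∈ insert a S, ∏ k ∈ (insert a S).erase j, F j k =
      (∏ j ∈ S, F j a) * ((∏ k ∈ S, F a k) * ∏ j ∈ S, ∏ k ∈ S.erase j, F j k) := by
  have hS : ∀ j ∈ S, ∏ k ∈ (insert a S).erase j, F j k = F j a * ∏ k ∈ S.erase j, F j k :=
    fun j hj => by
      have haj : a ≠ j := fun h => ha (h ▸ hj)
      rw [Finset.erase_insert_of_ne haj, Finset.prod_insert (by simp [ha])]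
  rw [Finset.prod_insert ha, Finset.erase_insert ha, Finset.prod_congr rfl hS,
    Finset.prod_mul_distrib, mul_left_comm]

variable {c : ℂ} {ι : Type*} {w : ι → ℂ}

theorem Admissible.inv_hC_sub (hw : Admissible c w) (a j k : ι) :
    (hC c (w j) (w k))⁻¹ - (hC c (w j) (w a))⁻¹ * (hC c (w a) (w k))⁻¹ =
      (fC c (w j) (w a))⁻¹ * ((fC c (w a) (w k))⁻¹ * (hC c (w j) (w k))⁻¹) := by
  have h₁ := hw.sub_add_ne_zero j k
  have h₂ := hw.sub_add_ne_zero j a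
  have h₃ := hw.sub_add_ne_zero a k
  simp only [inv_hC, inv_fC]
  field_simp
  ring

variable [DecidableEq ι]

-- A Cauchy determinant, as `1 / h(wⱼ, wₖ) = c / (wⱼ + c - wₖ)`.
theorem det_inv_hC (hw : Admissible c w) (S : Finset ι) :
    (of fun j k : S => (hC c (w j) (w k))⁻¹).det =
      ∏ j ∈ S, ∏ k ∈ S.erase j, (fC c (w j) (w k))⁻¹ := by
  induction S using Finset.induction_on with
  | empty => simp
  | insert a S ha ih =>
    have hc : c ≠ 0 := by simpa using hw.sub_add_ne_zero a a
    rw [prod_prod_erase_insert (fun j k => (fC c (w j) (w k))⁻¹) ha, ← ih, ← Finset.prod_coe_sort S,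
      ← Finset.prod_coe_sort S,
      det_insert_of_apply_self_eq_one (fun j k => (hC c (w j) (w k))⁻¹) ha (by simp [hC, hc]),
      ← det_mul_row, ← det_mul_column]
    congr 1
    ext j k
    exact hw.inv_hC_sub a j k

theorem Admissible.prod_erase_mul_prod_inv [Fintype ι] (hw : Admissible c w) {S : Finset ι}
    {j : ι} (hj : j ∈ S) :
    (∏ k ∈ Finset.univ.erase j, fC c (w j) (w k)) * ∏ k ∈ S.erase j, (fC c (w j) (w k))⁻¹ =
      ∏ k ∈ Sᶜ, fC c (w j) (w k) := by
  have hcompl : Finset.univ.erase j \ S.erase j = Sᶜ := by grind [Finset.mem_compl]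
  have hne : ∏ k ∈ S.erase j, fC c (w j) (w k) ≠ 0 :=
    Finset.prod_ne_zero_iff.2 fun k hk => hw.fC_ne_zero (Finset.ne_of_mem_erase hk).symm
  rw [← Finset.prod_sdiff (Finset.erase_subset_erase j (Finset.subset_univ S)), hcompl,
    Finset.prod_inv_distrib, mul_inv_cancel_right₀ hne]

theorem KIz_eq_sum {κ : Type*} [Fintype κ] [Fintype ι] (hw : Admissible c w) (z : ℂ)
    (x : κ → ℂ) :
    KIz c z x w = ∑ S : Finset ι,
      (-z) ^ Sᶜ.card * ((∏ i, ∏ j ∈ S, fC c (x i) (w j)) * fProd c w S Sᶜ) := by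
  set G : ι → ℂ := fun j =>
    (∏ i, fC c (x i) (w j)) * ∏ i ∈ Finset.univ.erase j, fC c (w j) (w i) with hG
  have hK : KIz c z x w =
      (of (fun j k => G j * (hC c (w j) (w k))⁻¹) + diagonal fun _ => -z).det := by
    rw [KIz]
    congr 1
    ext j k
    simp [hG, diagonal_apply, div_eq_mul_inv, add_comm]
  have hminor : ∀ S : Finset ι,
      ((of fun j k => G j * (hC c (w j) (w k))⁻¹).submatrix ((↑) : S → ι) (↑)).det =
        (∏ i, ∏ j ∈ S, fC c (x i) (w j)) * fProd c w S Sᶜ := fun S => by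
    refine (det_mul_column (fun j : S => G j)
      (of fun j k : S => (hC c (w j) (w k))⁻¹)).trans ?_
    rw [det_inv_hC hw, Finset.prod_coe_sort S, ← Finset.prod_mul_distrib, Finset.prod_comm,
      fProd, ← Finset.prod_mul_distrib]
    exact Finset.prod_congr rfl fun j hj => by
      rw [hG, mul_assoc, hw.prod_erase_mul_prod_inv hj]
  simp only [hK, det_add_diagonal, hminor, Finset.prod_const]

theorem KIz_comp_embedding {κ ν : Type*} [Fintype κ] [Fintype ν] [DecidableEq ν]
    (hw : Admissible c w) (e₁ : κ ↪ ι) (e₂ : ν ↪ ι) :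
    KIz c 1 (w ∘ e₁) (w ∘ e₂) = izerginSum c w (Finset.univ.map e₁) (Finset.univ.map e₂) := by
  have himage : (Finset.univ.map e₂).powerset =
      Finset.univ.map (Finset.mapEmbedding e₂).toEmbedding := by
    ext T
    simp [Finset.subset_map_iff, eq_comm]
  rw [KIz_eq_sum (hw.comp e₂.injective), izerginSum, himage, Finset.sum_map]
  refine Finset.sum_congr rfl fun S _ => ?_
  simp [izerginTerm, fProd, ← Finset.map_sdiff, Finset.compl_eq_univ_sdiff, mul_assoc]

end Determinants

/-- The `gl_N` Yangian relations for the entries `T i j` of a monodromy matrix. -/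
def YangianRelations (c : ℂ) {I R : Type*} [Ring R] [Algebra ℂ R] (T : I → I → ℂ → R) : Prop :=
  ∀ (i j k l : I) (x y : ℂ), x ≠ y →
    T i j x * T k l y - T k l y * T i j x = gC c x y • (T k j y * T i l x - T k j x * T i l y)

/-- The exchange relation between a diagonal entry `A` and a creation operator `B` of the
monodromy matrix. -/
def ExchangeRel (c : ℂ) {R : Type*} [Ring R] [Algebra ℂ R] (A B : ℂ → R) : Prop :=
  ∀ x y : ℂ, x ≠ y → A x * B y = fC c y x • (B y * A x) - gC c y x • (B x * A y)

namespace YangianRelations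

variable {c : ℂ} {I R : Type*} [Ring R] [Algebra ℂ R] {T : I → I → ℂ → R}

theorem commute (hT : YangianRelations c T) (i j : I) (x y : ℂ) :
    Commute (T i j x) (T i j y) := by
  rcases eq_or_ne x y with rfl | hxy
  · exact Commute.refl _
  set X := T i j x * T i j y - T i j y * T i j x with hX
  have h₁ : X = -(gC c x y • X) := by
    rw [← smul_neg, hX, neg_sub]
    exact hT i j i j x y hxy
  have h₂ : X = gC c x y • X := by
    have hg : gC c y x = -gC c x y := by rw [gC, gC, ← neg_sub, div_neg]
    have h := hT i j i j y x hxy.symm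
    rwa [hg, ← neg_sub, ← hX, neg_smul, neg_inj] at h
  have h₃ : (2 : ℂ) • X = 0 := by
    rw [two_smul]
    nth_rewrite 1 [h₁]
    rw [← h₂, neg_add_cancel]
  exact sub_eq_zero.1 ((smul_eq_zero_iff_right two_ne_zero).1 h₃)

theorem exchangeRel (hT : YangianRelations c T) (i j : I) : ExchangeRel c (T i i) (T i j) := by
  intro x y hxy
  rw [fC_eq_one_add_gC hxy.symm, add_smul, one_smul, add_sub_assoc, ← smul_sub,
    ← neg_sub (T i j x * _), smul_neg, ← hT i j i i y x hxy.symm]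
  abel

theorem exchangeRel_neg (hT : YangianRelations c T) (i j : I) :
    ExchangeRel (-c) (T j j) (T i j) := by
  intro x y hxy
  rw [fC_neg, gC_neg, fC_eq_one_add_gC hxy, add_smul, one_smul, add_sub_assoc, ← smul_sub,
    ← hT j j i j x y hxy]
  abel

theorem mul_eq_mul_add (hT : YangianRelations c T) (i j : I) {x y : ℂ} (hxy : x ≠ y) :
    T j i x * T i j y =
      T i j y * T j i x + gC c x y • (T i i y * T j j x - T i i x * T j j y) :=
  sub_eq_iff_eq_add'.1 (hT j i i j x y hxy)

end YangianRelations

/-- The product `∏ op (w i)` over `i ∈ s` of a commuting family of operators. -/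
def commProd {ι X M : Type*} [Monoid M] (op : X → M) (hop : ∀ x y, Commute (op x) (op y))
    (w : ι → X) (s : Finset ι) : M :=
  s.noncommProd (fun i => op (w i)) fun _ _ _ _ _ => hop _ _

section CommProd

variable {ι X M : Type*} [Monoid M] {op : X → M} {hop : ∀ x y, Commute (op x) (op y)} {w : ι → X}
  {s : Finset ι} {a : ι}

theorem commProd_empty : commProd op hop w ∅ = 1 :=
  Finset.noncommProd_empty _ _

variable [DecidableEq ι]

theorem commProd_insert (ha : a ∉ s) :
    commProd op hop w (insert a s) = op (w a) * commProd op hop w s :=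
  Finset.noncommProd_insert_of_notMem _ _ _ _ ha

theorem commProd_insert_right (ha : a ∉ s) :
    commProd op hop w (insert a s) = commProd op hop w s * op (w a) :=
  Finset.noncommProd_insert_of_notMem' _ _ _ _ ha

theorem mul_commProd_erase (ha : a ∈ s) :
    op (w a) * commProd op hop w (s.erase a) = commProd op hop w s := by
  rw [← commProd_insert (Finset.notMem_erase a s), Finset.insert_erase ha]

end CommProd

section DiagonalAction

variable {c : ℂ} {ι V : Type*} {w : ι → ℂ} [AddCommGroup V] [Module ℂ V]

theorem Admissible.inv_hC_eq_fC_mul_sub_gC_mul (hw : Admissible c w) {u v : ι} (huv : u ≠ v)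
    (a : ι) :
    (hC c (w u) (w a))⁻¹ =
      fC c (w v) (w u) * ((hC c (w u) (w a))⁻¹ * (fC c (w v) (w a))⁻¹) -
        gC c (w v) (w u) * ((hC c (w v) (w a))⁻¹ * (fC c (w u) (w a))⁻¹) := by
  have h₁ := hw.sub_add_ne_zero u a
  have h₂ := hw.sub_add_ne_zero v a
  have h₃ := hw.sub_ne_zero huv.symm
  simp only [inv_hC, fC, gC]
  field_simp
  ring

variable [DecidableEq ι]

/-- The contribution to the action of a diagonal operator with vacuum eigenvalue `lam` on a Bethe
vector in which the operator ends up with the argument `w a`; see `apply_commProd_erase`. -/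
def betheTerm (c : ℂ) (w : ι → ℂ) (lam : ℂ → ℂ) (B : ℂ → Module.End ℂ V)
    (hB : ∀ x y, Commute (B x) (B y)) (vac : V) (E : Finset ι) (a : ι) : V :=
  (lam (w a) * fProd c w (E.erase a) {a}) • commProd B hB w (E.erase a) vac

variable {A B : ℂ → Module.End ℂ V} {hB : ∀ x y, Commute (B x) (B y)} {lam : ℂ → ℂ} {vac : V}
  {E : Finset ι} {u v a : ι}

theorem apply_betheTerm_erase (hw : Admissible c w) (hv : v ∈ E) (hav : a ≠ v) :
    B (w v) (betheTerm c w lam B hB vac (E.erase v) a) =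
      (fC c (w v) (w a))⁻¹ • betheTerm c w lam B hB vac E a := by
  have hva : v ∈ E.erase a := Finset.mem_erase.2 ⟨hav.symm, hv⟩
  have hne := hw.fC_ne_zero hav.symm
  rw [betheTerm, betheTerm, map_smul, smul_smul, Finset.erase_right_comm,
    ← Module.End.mul_apply, mul_commProd_erase hva, ← fProd_mul_erase_left hva, fProd_singleton]
  congr 1
  field_simp

theorem apply_sum_betheTerm_erase (hw : Admissible c w) (hv : v ∈ E) (φ : ι → ℂ) :
    B (w v) (∑ a ∈ E.erase v, φ a • betheTerm c w lam B hB vac (E.erase v) a) =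
      ∑ a ∈ E, (φ a * (fC c (w v) (w a))⁻¹) • betheTerm c w lam B hB vac E a := by
  rw [← Finset.sum_erase E (a := v) (by rw [inv_fC_self, mul_zero, zero_smul]), map_sum]
  refine Finset.sum_congr rfl fun a ha => ?_
  rw [map_smul, apply_betheTerm_erase hw hv (Finset.ne_of_mem_erase ha), smul_smul]

theorem apply_commProd_erase (hw : Admissible c w) (hAB : ExchangeRel c A B)
    (hA : ∀ x, A x vac = lam x • vac) (hu : u ∈ E) :
    A (w u) (commProd B hB w (E.erase u) vac) =
      ∑ a ∈ E, (hC c (w u) (w a))⁻¹ • betheTerm c w lam B hB vac E a := by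
  induction E using Finset.strongInduction generalizing u with
  | H E ih =>
    have hc : c ≠ 0 := by simpa using hw.sub_add_ne_zero u u
    rcases (E.erase u).eq_empty_or_nonempty with hE | ⟨v, hv⟩
    · obtain rfl : E = {u} := by rw [← Finset.insert_erase hu, hE, insert_empty_eq]
      simp [betheTerm, hE, commProd_empty, hA, hC, hc, fProd]
    obtain ⟨hvu, hvE⟩ := Finset.mem_erase.1 hv
    have huv : u ∈ E.erase v := Finset.mem_erase.2 ⟨hvu.symm, hu⟩
    have hIHu := ih (E.erase v) (Finset.erase_ssubset hvE) huv
    have hIHv := ih (E.erase u) (Finset.erase_ssubset hu) hv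
    rw [Finset.erase_right_comm] at hIHu
    rw [← mul_commProd_erase hv, ← Module.End.mul_apply, ← mul_assoc,
      hAB _ _ (hw.injective.ne hvu.symm)]
    simp only [sub_mul, smul_mul_assoc, LinearMap.sub_apply, LinearMap.smul_apply,
      Module.End.mul_apply]
    rw [hIHu, hIHv, apply_sum_betheTerm_erase hw hvE, apply_sum_betheTerm_erase hw hu,
      Finset.smul_sum, Finset.smul_sum, ← Finset.sum_sub_distrib]
    refine Finset.sum_congr rfl fun a _ => ?_
    rw [smul_smul, smul_smul, ← sub_smul,
      ← hw.inv_hC_eq_fC_mul_sub_gC_mul hvu.symm]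

end DiagonalAction

/-- A highest weight vector of a representation of the `gl_2` Yangian, with weights `lam1` and
`lam2`. -/
structure IsHighestWeightVector {V : Type*} [AddCommGroup V] [Module ℂ V]
    (T : Fin 2 → Fin 2 → ℂ → Module.End ℂ V) (lam1 lam2 : ℂ → ℂ) (vac : V) : Prop where
  apply_zero_zero : ∀ x, T 0 0 x vac = lam1 x • vac
  apply_one_one : ∀ x, T 1 1 x vac = lam2 x • vac
  apply_one_zero : ∀ x, T 1 0 x vac = 0

section AnnihilationAction

variable {c : ℂ} {ι V : Type*} {w : ι → ℂ} [AddCommGroup V] [Module ℂ V]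

theorem Admissible.inv_hC_mul_inv_hC_eq (hw : Admissible c w) {u v : ι} (huv : u ≠ v) (a b : ι) :
    (hC c (w a) (w u))⁻¹ * (hC c (w u) (w b))⁻¹ =
      (fC c (w a) (w v))⁻¹ * ((hC c (w a) (w u))⁻¹ * (hC c (w u) (w b))⁻¹ *
        (fC c (w v) (w b))⁻¹) +
      gC c (w u) (w v) *
        ((fC c (w a) (w v))⁻¹ * ((hC c (w a) (w u))⁻¹ * (hC c (w v) (w b))⁻¹) -
          (fC c (w a) (w u))⁻¹ * ((hC c (w a) (w v))⁻¹ * (hC c (w u) (w b))⁻¹)) := by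
  have h₁ := hw.sub_add_ne_zero a u
  have h₂ := hw.sub_add_ne_zero a v
  have h₃ := hw.sub_add_ne_zero u b
  have h₄ := hw.sub_add_ne_zero v b
  have h₅ := hw.sub_ne_zero huv
  simp only [inv_hC, inv_fC, gC]
  field_simp
  ring

variable [DecidableEq ι]

/-- The contribution to the action of `t₂₁` on a Bethe vector in which the arguments `w a` and
`w b` are carried by `t₂₂` and `t₁₁`; see `apply_one_zero_commProd_erase`. -/
def betheTerm₂ (c : ℂ) (w : ι → ℂ) (lam1 lam2 : ℂ → ℂ) (B : ℂ → Module.End ℂ V)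
    (hB : ∀ x y, Commute (B x) (B y)) (vac : V) (E : Finset ι) (a b : ι) : V :=
  (lam2 (w a) * fProd c w {a} (E.erase a)) • betheTerm c w lam1 B hB vac (E.erase a) b

variable {T : Fin 2 → Fin 2 → ℂ → Module.End ℂ V} (hT : YangianRelations c T)
  {lam1 lam2 : ℂ → ℂ} {vac : V} {E : Finset ι} {u v a : ι}

theorem smul_betheTerm_erase (hw : Admissible c w) {B : ℂ → Module.End ℂ V}
    {hB : ∀ x y, Commute (B x) (B y)} (hv : v ∈ E) (hav : a ≠ v) (b : ι) :
    (lam2 (w a) * fProd c w {a} ((E.erase v).erase a)) • betheTerm c w lam1 B hB vac (E.erase a) b =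
      (fC c (w a) (w v))⁻¹ • betheTerm₂ c w lam1 lam2 B hB vac E a b := by
  have hva : v ∈ E.erase a := Finset.mem_erase.2 ⟨hav.symm, hv⟩
  have hne := hw.fC_ne_zero hav
  rw [betheTerm₂, smul_smul, Finset.erase_right_comm, ← fProd_mul_erase_right hva,
    fProd_singleton]
  congr 1
  field_simp

theorem apply_zero_zero_apply_one_one_commProd (hw : Admissible c w)
    (hvac : IsHighestWeightVector T lam1 lam2 vac) (hu : u ∈ E) (hv : v ∈ E) (huv : u ≠ v) :
    T 0 0 (w v) (T 1 1 (w u)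
        (commProd (T 0 1) (hT.commute 0 1) w ((E.erase v).erase u) vac)) =
      ∑ a ∈ E, (fC c (w a) (w v))⁻¹ • ∑ b ∈ E.erase a,
        ((hC c (w a) (w u))⁻¹ * (hC c (w v) (w b))⁻¹) •
          betheTerm₂ c w lam1 lam2 (T 0 1) (hT.commute 0 1) vac E a b := by
  have huE : u ∈ E.erase v := Finset.mem_erase.2 ⟨huv, hu⟩
  rw [apply_commProd_erase hw.neg (hT.exchangeRel_neg 0 1) hvac.apply_one_one huE, map_sum,
    ← Finset.sum_erase E (a := v) (by rw [inv_fC_self, zero_smul])]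
  refine Finset.sum_congr rfl fun a ha => ?_
  have hav := Finset.ne_of_mem_erase ha
  have hva : v ∈ E.erase a := Finset.mem_erase.2 ⟨hav.symm, hv⟩
  rw [betheTerm, map_smul, map_smul, Finset.erase_right_comm,
    apply_commProd_erase hw (hT.exchangeRel 0 1) hvac.apply_zero_zero hva, hC_neg, fProd_neg,
    Finset.smul_sum, Finset.smul_sum, Finset.smul_sum]
  refine Finset.sum_congr rfl fun b _ => ?_
  rw [smul_comm _ _ (betheTerm _ _ _ _ _ _ _ _), Finset.erase_right_comm,
    smul_betheTerm_erase hw hv hav, smul_smul, smul_smul, smul_smul]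
  congr 1
  ring

theorem apply_sum_betheTerm₂_erase (hw : Admissible c w) {B : ℂ → Module.End ℂ V}
    {hB : ∀ x y, Commute (B x) (B y)} (hv : v ∈ E) (φ : ι → ι → ℂ) :
    B (w v) (∑ a ∈ E.erase v, ∑ b ∈ (E.erase v).erase a,
        φ a b • betheTerm₂ c w lam1 lam2 B hB vac (E.erase v) a b) =
      ∑ a ∈ E, (fC c (w a) (w v))⁻¹ • ∑ b ∈ E.erase a,
        (φ a b * (fC c (w v) (w b))⁻¹) • betheTerm₂ c w lam1 lam2 B hB vac E a b := by
  rw [map_sum, ← Finset.sum_erase E (a := v) (by rw [inv_fC_self, zero_smul])]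
  refine Finset.sum_congr rfl fun a ha => ?_
  have hav := Finset.ne_of_mem_erase ha
  have hva : v ∈ E.erase a := Finset.mem_erase.2 ⟨hav.symm, hv⟩
  have hsum : ∑ b ∈ (E.erase v).erase a,
        φ a b • betheTerm₂ c w lam1 lam2 B hB vac (E.erase v) a b =
      (lam2 (w a) * fProd c w {a} ((E.erase v).erase a)) • ∑ b ∈ (E.erase a).erase v,
        φ a b • betheTerm c w lam1 B hB vac ((E.erase a).erase v) b := by
    rw [Finset.smul_sum, Finset.erase_right_comm]
    refine Finset.sum_congr rfl fun b _ => ?_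
    rw [betheTerm₂, smul_comm, Finset.erase_right_comm]
  rw [hsum, map_smul, apply_sum_betheTerm_erase hw hva, Finset.smul_sum, Finset.smul_sum]
  refine Finset.sum_congr rfl fun b _ => ?_
  rw [smul_comm, smul_betheTerm_erase hw hv hav, smul_comm]

theorem apply_one_zero_commProd_erase (hw : Admissible c w)
    (hvac : IsHighestWeightVector T lam1 lam2 vac) (hu : u ∈ E) :
    T 1 0 (w u) (commProd (T 0 1) (hT.commute 0 1) w (E.erase u) vac) =
      ∑ a ∈ E, ∑ b ∈ E.erase a, ((hC c (w a) (w u))⁻¹ * (hC c (w u) (w b))⁻¹) •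
        betheTerm₂ c w lam1 lam2 (T 0 1) (hT.commute 0 1) vac E a b := by
  induction E using Finset.strongInduction generalizing u with
  | H E ih =>
    rcases (E.erase u).eq_empty_or_nonempty with hE | ⟨v, hv⟩
    · obtain rfl : E = {u} := by rw [← Finset.insert_erase hu, hE, insert_empty_eq]
      simp [commProd_empty, hvac.apply_one_zero]
    obtain ⟨hvu, hvE⟩ := Finset.mem_erase.1 hv
    have huv : u ∈ E.erase v := Finset.mem_erase.2 ⟨hvu.symm, hu⟩
    rw [← mul_commProd_erase hv, ← Module.End.mul_apply, ← mul_assoc,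
      hT.mul_eq_mul_add 0 1 (hw.injective.ne hvu.symm)]
    simp only [add_mul, sub_mul, smul_mul_assoc, LinearMap.add_apply, LinearMap.sub_apply,
      LinearMap.smul_apply, Module.End.mul_apply]
    rw [apply_zero_zero_apply_one_one_commProd hT hw hvac hvE hu hvu, Finset.erase_right_comm,
      ih _ (Finset.erase_ssubset hvE) huv, apply_sum_betheTerm₂_erase hw hvE,
      apply_zero_zero_apply_one_one_commProd hT hw hvac hu hvE hvu.symm,
      ← Finset.sum_sub_distrib, Finset.smul_sum, ← Finset.sum_add_distrib]
    refine Finset.sum_congr rfl fun a _ => ?_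
    simp only [Finset.smul_sum, ← Finset.sum_sub_distrib, ← Finset.sum_add_distrib]
    refine Finset.sum_congr rfl fun b _ => ?_
    simp only [smul_smul, ← sub_smul, ← add_smul]
    congr 1
    linear_combination -hw.inv_hC_mul_inv_hC_eq hvu.symm a b

end AnnihilationAction

/-- The coefficient `K(v̄_II|ū_II) K̄(v̄_I|ū_I) f(ū_I, ū_II) f(v̄_II, v̄_I)` of a pair of partitions
in the scalar product formula. -/
def korepinCoeff (c : ℂ) {ι : Type*} [DecidableEq ι] (w : ι → ℂ) (uI uII vI vII : Finset ι) : ℂ :=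
  izerginSum c w vII uII * izerginSum (-c) w vI uI * fProd c w uI uII * fProd c w vII vI

/-- The coefficient of `λ₂(a) λ₁(b) t₁₂(E ∖ {a, b})` in the action of `t₂₁(u)` on the Bethe vector
`t₁₂(E ∖ u)`. -/
def actionCoeff (c : ℂ) {ι : Type*} [DecidableEq ι] (w : ι → ℂ) (u : ι) (E : Finset ι) (a b : ι) :
    ℂ :=
  fProd c w {a} (E.erase a) * fProd c w ((E.erase a).erase b) {b} *
    ((hC c (w a) (w u))⁻¹ * (hC c (w u) (w b))⁻¹)

/-- The summand of `korepinSum` in which the parameters indexed by `X` carry `λ₂` and the other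
ones carry `λ₁`. -/
def korepinTerm (c : ℂ) {ι : Type*} [DecidableEq ι] (w : ι → ℂ) (lam1 lam2 : ℂ → ℂ)
    (U s X : Finset ι) : ℂ :=
  (∏ i ∈ X, lam2 (w i)) * (∏ i ∈ (U ∪ s) \ X, lam1 (w i)) *
    korepinCoeff c w (U ∩ X) (U \ X) (s \ X) (s ∩ X)

/-- The Izergin–Korepin sum for `ū = w̄_U` and `v̄ = w̄_s`. A pair of partitions with
`#ū_I = #v̄_I` is encoded by `X = ū_I ∪ v̄_II`, a subset of `U ∪ s` with `#U` elements. -/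
def korepinSum (c : ℂ) {ι : Type*} [DecidableEq ι] (w : ι → ℂ) (lam1 lam2 : ℂ → ℂ)
    (U s : Finset ι) : ℂ :=
  ∑ X ∈ Finset.powersetCard U.card (U ∪ s), korepinTerm c w lam1 lam2 U s X

section KorepinRecursion

section Reindexing

variable {ι M : Type*} [DecidableEq ι] [AddCommMonoid M] {E W : Finset ι}

theorem sum_powersetCard_erase_eq_sum_inter (hE : E ⊆ W) (k : ℕ) (F : ι → Finset ι → M) :
    ∑ a ∈ E, ∑ X ∈ Finset.powersetCard k (W.erase a), F a X =
      ∑ Y ∈ Finset.powersetCard (k + 1) W, ∑ a ∈ E ∩ Y, F a (Y.erase a) := by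
  rw [Finset.sum_sigma', Finset.sum_sigma']
  refine Finset.sum_bij' (fun p _ => ⟨insert p.1 p.2, p.1⟩) (fun p _ => ⟨p.2, p.1.erase p.2⟩)
    ?_ ?_ ?_ ?_ ?_ <;>
  rintro ⟨_, _⟩ h <;>
  simp only [Finset.mem_sigma, Finset.mem_powersetCard] at h ⊢
  · grind
  · grind
  · rw [Finset.erase_insert (by grind)]
  · rw [Finset.insert_erase (by grind)]
  · rw [Finset.erase_insert (by grind)]

theorem sum_powersetCard_erase_eq_sum_sdiff (k : ℕ) (F : ι → Finset ι → M) :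
    ∑ b ∈ E, ∑ X ∈ Finset.powersetCard k (W.erase b), F b X =
      ∑ X ∈ Finset.powersetCard k W, ∑ b ∈ E \ X, F b X :=
  Finset.sum_comm' fun b X => by
    simp only [Finset.mem_powersetCard]
    grind

theorem sum_powersetCard_erase_erase (hE : E ⊆ W) (k : ℕ) (F : ι → ι → Finset ι → M) :
    ∑ a ∈ E, ∑ b ∈ E.erase a, ∑ X ∈ Finset.powersetCard k ((W.erase a).erase b), F a b X =
      ∑ Y ∈ Finset.powersetCard (k + 1) W, ∑ a ∈ E ∩ Y, ∑ b ∈ E \ Y, F a b (Y.erase a) := by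
  rw [Finset.sum_congr rfl fun a _ => sum_powersetCard_erase_eq_sum_sdiff k (F a),
    sum_powersetCard_erase_eq_sum_inter hE]
  refine Finset.sum_congr rfl fun Y _ => Finset.sum_congr rfl fun a ha => ?_
  rw [show E.erase a \ Y.erase a = E \ Y by grind]

end Reindexing

variable {c : ℂ} {ι : Type*} [DecidableEq ι] {w : ι → ℂ} {uI uII vI vII : Finset ι} {u a b : ι}

theorem actionCoeff_mul_korepinCoeff (hv : Disjoint vI vII) (ha : a ∈ vII) (hb : b ∈ vI) :
    actionCoeff c w u (vI ∪ vII) a b * korepinCoeff c w uI uII (vI.erase b) (vII.erase a) =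
      fProd c w uI uII * fProd c w vII vI *
        ((izerginSum c w (vII.erase a) uII * fProd c w {a} (vII.erase a) *
            (hC c (w a) (w u))⁻¹) *
          (izerginSum (-c) w (vI.erase b) uI * fProd (-c) w {b} (vI.erase b) *
            (hC (-c) (w b) (w u))⁻¹)) := by
  have haI : a ∉ vI := Finset.disjoint_right.1 hv ha
  have hbII : b ∉ vII := Finset.disjoint_left.1 hv hb
  have hEa : (vI ∪ vII).erase a = vI ∪ vII.erase a := by
    rw [Finset.erase_union_distrib, Finset.erase_eq_of_notMem haI]
  have hEab : ((vI ∪ vII).erase a).erase b = vI.erase b ∪ vII.erase a := by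
    rw [hEa, Finset.erase_union_distrib,
      Finset.erase_eq_of_notMem fun h => hbII (Finset.mem_of_mem_erase h)]
  have hva : Disjoint vI (vII.erase a) := hv.mono_right (Finset.erase_subset a vII)
  rw [actionCoeff, korepinCoeff, hEab, hEa, fProd_union_right hva,
    fProd_union_left (hva.mono_left (Finset.erase_subset b vI)), fProd_neg, hC_neg,
    ← fProd_mul_erase_left ha (t := vI), ← fProd_mul_erase_right hb (s := vII.erase a)]
  ring

theorem sum_actionCoeff_mul_korepinCoeff (hv : Disjoint vI vII) :
    ∑ a ∈ vII, ∑ b ∈ vI, actionCoeff c w u (vI ∪ vII) a b *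
        korepinCoeff c w uI uII (vI.erase b) (vII.erase a) =
      fProd c w uI uII * fProd c w vII vI *
        (izerginExpansion c w vII uII u * izerginExpansion (-c) w vI uI u) := by
  rw [izerginExpansion, izerginExpansion, Finset.sum_mul_sum, Finset.mul_sum]
  refine Finset.sum_congr rfl fun a ha => ?_
  rw [Finset.mul_sum]
  exact Finset.sum_congr rfl fun b hb => actionCoeff_mul_korepinCoeff hv ha hb

theorem sum_actionCoeff_mul_korepinCoeff_of_mem_right (hw : Admissible c w) (hv : Disjoint vI vII)
    (hI : Disjoint uI vI) (hII : Disjoint uII vII) (hu : u ∈ vII) (huI : u ∉ uI) :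
    ∑ a ∈ vII, ∑ b ∈ vI, actionCoeff c w u (vI ∪ vII) a b *
        korepinCoeff c w uI uII (vI.erase b) (vII.erase a) =
      korepinCoeff c w (insert u uI) uII vI (vII.erase u) := by
  rw [sum_actionCoeff_mul_korepinCoeff hv, izerginExpansion_of_mem hw hII.symm hu, korepinCoeff,
    ← fProd_mul_izerginExpansion hw.neg hI.symm (Finset.disjoint_right.1 hv hu) huI, fProd_neg,
    fProd_insert_left huI, ← fProd_mul_erase_left hu]
  ring

theorem sum_actionCoeff_mul_korepinCoeff_of_mem_left (hw : Admissible c w) (hv : Disjoint vI vII)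
    (hI : Disjoint uI vI) (hII : Disjoint uII vII) (hu : u ∈ vI) (huII : u ∉ uII) :
    ∑ a ∈ vII, ∑ b ∈ vI, actionCoeff c w u (vI ∪ vII) a b *
        korepinCoeff c w uI uII (vI.erase b) (vII.erase a) =
      korepinCoeff c w uI (insert u uII) (vI.erase u) vII := by
  rw [sum_actionCoeff_mul_korepinCoeff hv, izerginExpansion_of_mem hw.neg hI.symm hu, korepinCoeff,
    ← fProd_mul_izerginExpansion hw hII.symm (Finset.disjoint_left.1 hv hu) huII, fProd_neg,
    fProd_insert_right huII, ← fProd_mul_erase_right hu (s := vII)]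
  ring

variable {lam1 lam2 : ℂ → ℂ} {U s E Y : Finset ι}

theorem korepinTerm_erase_erase (hUE : Disjoint U E) (ha : a ∈ E ∩ Y) (hb : b ∈ E \ Y) :
    lam2 (w a) * lam1 (w b) * korepinTerm c w lam1 lam2 U ((E.erase a).erase b) (Y.erase a) =
      (∏ i ∈ Y, lam2 (w i)) * (∏ i ∈ (U ∪ E) \ Y, lam1 (w i)) *
        korepinCoeff c w (U ∩ Y) (U \ Y) ((E \ Y).erase b) ((E ∩ Y).erase a) := by
  obtain ⟨haE, haY⟩ := Finset.mem_inter.1 ha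
  obtain ⟨hbE, hbY⟩ := Finset.mem_sdiff.1 hb
  have haU : a ∉ U := Finset.disjoint_right.1 hUE haE
  have hbU : b ∉ U := Finset.disjoint_right.1 hUE hbE
  have hsdiff : (U ∪ (E.erase a).erase b) \ Y.erase a = ((U ∪ E) \ Y).erase b := by grind
  have hUI : U ∩ Y.erase a = U ∩ Y := by grind
  have hUII : U \ Y.erase a = U \ Y := by grind
  have hEI : (E.erase a).erase b \ Y.erase a = (E \ Y).erase b := by grind
  have hEII : (E.erase a).erase b ∩ Y.erase a = (E ∩ Y).erase a := by grind
  rw [korepinTerm, hsdiff, hUI, hUII, hEI, hEII, ← Finset.mul_prod_erase Y _ haY,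
    ← Finset.mul_prod_erase ((U ∪ E) \ Y) _ (show b ∈ (U ∪ E) \ Y by grind)]
  ring

theorem korepinTerm_insert (hw : Admissible c w) (hUs : Disjoint U s) (huU : u ∉ U) (hus : u ∉ s) :
    korepinTerm c w lam1 lam2 (insert u U) s Y =
      ∑ a ∈ insert u s ∩ Y, ∑ b ∈ insert u s \ Y,
        lam2 (w a) * lam1 (w b) * actionCoeff c w u (insert u s) a b *
          korepinTerm c w lam1 lam2 U (((insert u s).erase a).erase b) (Y.erase a) := by
  set E := insert u s with hE
  have hUE : Disjoint U E := Finset.disjoint_insert_right.2 ⟨huU, hUs⟩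
  have hEY : E \ Y ∪ E ∩ Y = E := Finset.sdiff_union_inter E Y
  have hv : Disjoint (E \ Y) (E ∩ Y) := Finset.disjoint_sdiff_inter E Y
  have hI : Disjoint (U ∩ Y) (E \ Y) := hUE.mono Finset.inter_subset_left Finset.sdiff_subset
  have hII : Disjoint (U \ Y) (E ∩ Y) := hUE.mono Finset.sdiff_subset Finset.inter_subset_left
  have hcoeff : korepinCoeff c w (insert u U ∩ Y) (insert u U \ Y) (s \ Y) (s ∩ Y) =
      ∑ a ∈ E ∩ Y, ∑ b ∈ E \ Y, actionCoeff c w u (E \ Y ∪ E ∩ Y) a b *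
        korepinCoeff c w (U ∩ Y) (U \ Y) ((E \ Y).erase b) ((E ∩ Y).erase a) := by
    by_cases hu : u ∈ Y
    · rw [sum_actionCoeff_mul_korepinCoeff_of_mem_right hw hv hI hII (by grind) (by grind)]
      congr 1 <;> grind
    · rw [sum_actionCoeff_mul_korepinCoeff_of_mem_left hw hv hI hII (by grind) (by grind)]
      congr 1 <;> grind
  rw [korepinTerm, hcoeff, hEY, Finset.mul_sum]
  refine Finset.sum_congr rfl fun a ha => ?_
  rw [Finset.mul_sum]
  refine Finset.sum_congr rfl fun b hb => ?_
  rw [Finset.insert_union, ← Finset.union_insert, ← hE]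
  linear_combination -actionCoeff c w u E a b *
    korepinTerm_erase_erase (c := c) (w := w) (lam1 := lam1) (lam2 := lam2) hUE ha hb

theorem korepinSum_insert (hw : Admissible c w) (hUs : Disjoint U s) (huU : u ∉ U) (hus : u ∉ s) :
    korepinSum c w lam1 lam2 (insert u U) s =
      ∑ a ∈ insert u s, ∑ b ∈ (insert u s).erase a,
        lam2 (w a) * lam1 (w b) * actionCoeff c w u (insert u s) a b *
          korepinSum c w lam1 lam2 U (((insert u s).erase a).erase b) := by
  have hUE : Disjoint U (insert u s) := Finset.disjoint_insert_right.2 ⟨huU, hUs⟩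
  have hambient : ∀ a ∈ insert u s, ∀ b ∈ (insert u s).erase a,
      U ∪ ((insert u s).erase a).erase b = ((U ∪ insert u s).erase a).erase b := by
    intro a ha b hb
    have haU := Finset.disjoint_right.1 hUE ha
    have hbU := Finset.disjoint_right.1 hUE (Finset.mem_of_mem_erase hb)
    grind
  simp only [korepinSum, Finset.mul_sum]
  rw [Finset.sum_congr rfl fun a ha => Finset.sum_congr rfl fun b hb => by
      rw [hambient a ha b hb],
    sum_powersetCard_erase_erase Finset.subset_union_right, Finset.card_insert_of_notMem huU,
    Finset.insert_union, ← Finset.union_insert]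
  exact Finset.sum_congr rfl fun Y _ => korepinTerm_insert hw hUs huU hus

end KorepinRecursion

section ScalarProduct

variable {c : ℂ} {V : Type*} [AddCommGroup V] [Module ℂ V]
  {T : Fin 2 → Fin 2 → ℂ → Module.End ℂ V} (hT : YangianRelations c T)
  {lam1 lam2 : ℂ → ℂ} {vac : V}

theorem korepinSum_empty {ι : Type*} [DecidableEq ι] (w : ι → ℂ) :
    korepinSum c w lam1 lam2 ∅ ∅ = 1 := by
  simp [korepinSum, korepinTerm, korepinCoeff, izerginSum, izerginTerm, fProd]

theorem commProd_apply_commProd {ι : Type*} [DecidableEq ι] {w : ι → ℂ} (hw : Admissible c w)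
    (hvac : IsHighestWeightVector T lam1 lam2 vac) {U s : Finset ι} (hUs : Disjoint U s)
    (hcard : U.card = s.card) :
    commProd (T 1 0) (hT.commute 1 0) w U (commProd (T 0 1) (hT.commute 0 1) w s vac) =
      korepinSum c w lam1 lam2 U s • vac := by
  induction U using Finset.induction_on generalizing s with
  | empty =>
    obtain rfl : s = ∅ := Finset.card_eq_zero.1 (by rw [← hcard, Finset.card_empty])
    simp [commProd_empty, korepinSum_empty]
  | insert u U huU ih =>
    obtain ⟨hus, hUs⟩ := Finset.disjoint_insert_left.1 hUs
    have hUE : Disjoint U (insert u s) := Finset.disjoint_insert_right.2 ⟨huU, hUs⟩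
    have haction := apply_one_zero_commProd_erase hT hw hvac (Finset.mem_insert_self u s)
    rw [Finset.erase_insert hus] at haction
    rw [commProd_insert_right huU, Module.End.mul_apply, haction, korepinSum_insert hw hUs huU hus,
      map_sum, Finset.sum_smul]
    refine Finset.sum_congr rfl fun a ha => ?_
    rw [map_sum, Finset.sum_smul]
    refine Finset.sum_congr rfl fun b hb => ?_
    have hab : (((insert u s).erase a).erase b).card = U.card := by
      simp [Finset.card_erase_of_mem hb, Finset.card_erase_of_mem ha, hus, ← hcard, huU]
    rw [betheTerm₂, betheTerm, map_smul, map_smul, map_smul,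
      ih (hUE.mono_right ((Finset.erase_subset _ _).trans (Finset.erase_subset _ _))) hab.symm,
      smul_smul, smul_smul, smul_smul, actionCoeff]
    congr 1
    ring

theorem opProd_univ_eq_commProd {ι : Type*} {op : ℂ → Module.End ℂ V}
    (hop : ∀ x y, Commute (op x) (op y)) (w : ι → ℂ) {n : ℕ} (e : Fin n ↪ ι) :
    opProd op (w ∘ e) Finset.univ = commProd op hop w (Finset.univ.map e) := by
  classical
  have hmap : Finset.univ.map e = ((Finset.univ.sort (· ≤ ·)).map e).toFinset := by
    ext i
    simp
  simp only [opProd, commProd, hmap]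
  rw [Finset.noncommProd_toFinset _ _ _ ((Finset.sort_nodup _ _).map e.injective), List.map_map]
  rfl

theorem sum_powersetCard_univ_sum {α β M : Type*} [Fintype α] [Fintype β] [DecidableEq β]
    [AddCommMonoid M] (F : Finset (α ⊕ β) → M) :
    ∑ X ∈ Finset.powersetCard (Fintype.card β) Finset.univ, F X =
      ∑ s : Finset α, ∑ t ∈ Finset.powersetCard s.card Finset.univ, F (s.disjSum tᶜ) := by
  rw [Finset.sum_sigma']
  refine Finset.sum_bij' (fun X _ => ⟨X.toLeft, X.toRightᶜ⟩) (fun p _ => p.1.disjSum p.2ᶜ)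
    ?_ ?_ ?_ ?_ ?_
  · intro X hX
    have hcard := Finset.card_toLeft_add_card_toRight (u := X)
    have hX' := (Finset.mem_powersetCard.1 hX).2
    simp only [Finset.mem_sigma, Finset.mem_univ, true_and, Finset.mem_powersetCard,
      Finset.subset_univ, Finset.card_compl]
    omega
  · rintro ⟨s, t⟩ h
    have ht := Finset.card_le_univ t
    simp only [Finset.mem_sigma, Finset.mem_univ, true_and, Finset.mem_powersetCard,
      Finset.subset_univ] at h
    simp only [Finset.mem_powersetCard, Finset.subset_univ, true_and, Finset.card_disjSum,
      Finset.card_compl]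
    omega
  all_goals simp [Finset.toLeft_disjSum_toRight]

theorem KIz_restr {ι : Type*} [DecidableEq ι] {w : ι → ℂ} (hw : Admissible c w) {n m : ℕ}
    (e₁ : Fin n ↪ ι) (e₂ : Fin m ↪ ι) (s : Finset (Fin n)) (t : Finset (Fin m)) :
    KIz c 1 (restr (w ∘ e₁) s) (restr (w ∘ e₂) t) = izerginSum c w (s.map e₁) (t.map e₂) := by
  have hmap : ∀ {k : ℕ} (e : Fin k ↪ ι) (r : Finset (Fin k)),
      Finset.univ.map ((Function.Embedding.subtype (· ∈ r)).trans e) = r.map e := fun e r => by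
    rw [← Finset.map_map, ← Finset.attach_eq_univ, Finset.attach_map_val]
  have h := KIz_comp_embedding hw ((Function.Embedding.subtype (· ∈ s)).trans e₁)
    ((Function.Embedding.subtype (· ∈ t)).trans e₂)
  rwa [hmap, hmap] at h

theorem korepinTerm_disjSum {n : ℕ} {u v : Fin n → ℂ} (hw : Admissible c (Sum.elim u v))
    (sU sV : Finset (Fin n)) :
    korepinTerm c (Sum.elim u v) lam1 lam2 (Finset.univ.map .inl) (Finset.univ.map .inr)
        (sU.disjSum sVᶜ) =
      (∏ i ∈ sU, lam2 (u i)) * (∏ j ∈ sVᶜ, lam2 (v j)) *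
        (∏ i ∈ sUᶜ, lam1 (u i)) * (∏ j ∈ sV, lam1 (v j)) *
        KIz c 1 (restr v sVᶜ) (restr u sUᶜ) *
        KIzBar c 1 (restr v sV) (restr u sU) *
        fSS c u sU sUᶜ * fSS c v sVᶜ sV := by
  have hUI : Finset.univ.map .inl ∩ sU.disjSum sVᶜ = sU.map .inl := by ext (i | i) <;> simp
  have hUII : Finset.univ.map .inl \ sU.disjSum sVᶜ = sUᶜ.map .inl := by ext (i | i) <;> simp
  have hVI : Finset.univ.map .inr \ sU.disjSum sVᶜ = sV.map .inr := by ext (i | i) <;> simp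
  have hVII : Finset.univ.map .inr ∩ sU.disjSum sVᶜ = sVᶜ.map .inr := by ext (i | i) <;> simp
  have hcompl : (Finset.univ.map .inl ∪ Finset.univ.map .inr) \ sU.disjSum sVᶜ =
      sUᶜ.disjSum sV := by ext (i | i) <;> simp
  have hK : KIz c 1 (restr v sVᶜ) (restr u sUᶜ) =
      izerginSum c (Sum.elim u v) (sVᶜ.map .inr) (sUᶜ.map .inl) := KIz_restr hw .inr .inl _ _
  have hKBar : KIzBar c 1 (restr v sV) (restr u sU) =
      izerginSum (-c) (Sum.elim u v) (sV.map .inr) (sU.map .inl) := KIz_restr hw.neg .inr .inl _ _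
  rw [korepinTerm, korepinCoeff, hUI, hUII, hVI, hVII, hcompl, hK, hKBar, Finset.prod_disjSum,
    Finset.prod_disjSum]
  simp only [fProd, fSS, Finset.prod_map, Function.Embedding.inl_apply,
    Function.Embedding.inr_apply, Sum.elim_inl, Sum.elim_inr]
  ring

end ScalarProduct

theorem stmt1_general {c : ℂ} {V : Type*} [AddCommGroup V] [Module ℂ V]
    {T : Fin 2 → Fin 2 → ℂ → Module.End ℂ V} (hT : YangianRelations c T) {lam1 lam2 : ℂ → ℂ}
    {vac : V} (hvac : IsHighestWeightVector T lam1 lam2 vac) {n : ℕ} {u v : Fin n → ℂ}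
    (hw : Admissible c (Fin.append u v)) :
    (opProd (T 1 0) u Finset.univ * opProd (T 0 1) v Finset.univ) vac =
      (∑ sU : Finset (Fin n),
        ∑ sV ∈ Finset.powersetCard sU.card (Finset.univ : Finset (Fin n)),
          (∏ i ∈ sU, lam2 (u i)) * (∏ j ∈ sVᶜ, lam2 (v j)) *
            (∏ i ∈ sUᶜ, lam1 (u i)) * (∏ j ∈ sV, lam1 (v j)) *
            KIz c 1 (restr v sVᶜ) (restr u sUᶜ) *
            KIzBar c 1 (restr v sV) (restr u sU) *
            fSS c u sU sUᶜ * fSS c v sVᶜ sV) • vac := by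
  have hdisj : Disjoint (Finset.univ.map (.inl : Fin n ↪ Fin n ⊕ Fin n))
      (Finset.univ.map .inr) := Finset.disjoint_map_inl_map_inr _ _
  have hunion : (Finset.univ.map (.inl : Fin n ↪ Fin n ⊕ Fin n)) ∪ Finset.univ.map .inr =
      Finset.univ := by ext (i | i) <;> simp
  have hC : opProd (T 1 0) u Finset.univ =
      commProd (T 1 0) (hT.commute 1 0) (Sum.elim u v) (Finset.univ.map .inl) :=
    opProd_univ_eq_commProd _ (Sum.elim u v) .inl
  have hB : opProd (T 0 1) v Finset.univ =
      commProd (T 0 1) (hT.commute 0 1) (Sum.elim u v) (Finset.univ.map .inr) :=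
    opProd_univ_eq_commProd _ (Sum.elim u v) .inr
  rw [hC, hB, Module.End.mul_apply, commProd_apply_commProd hT hw.sumElim hvac hdisj (by simp),
    korepinSum, hunion, Finset.card_map, Finset.card_univ, sum_powersetCard_univ_sum]
  simp only [korepinTerm_disjSum hw.sumElim]

/-- Izergin--Korepin form of the scalar product of Bethe vectors: a sum over
independent partitions of `ū` and `v̄` with `#ū_I = #v̄_I`. -/
theorem stmt1
    (c : ℂ) (hc : c ≠ 0)
    (V : Type*) [AddCommGroup V] [Module ℂ V]
    (T : Fin 2 → Fin 2 → ℂ → Module.End ℂ V)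
    (vac : V) (lam1 lam2 : ℂ → ℂ) (vacDual : V →ₗ[ℂ] ℂ)
    (hYang : ∀ (i j k l : Fin 2) (x y : ℂ), x ≠ y →
      T i j x * T k l y - T k l y * T i j x
        = gC c x y • (T k j y * T i l x - T k j x * T i l y))
    (hCommSame : ∀ (i j : Fin 2) (x y : ℂ), T i j x * T i j y = T i j y * T i j x)
    (hvac11 : ∀ x : ℂ, T 0 0 x vac = lam1 x • vac)
    (hvac22 : ∀ x : ℂ, T 1 1 x vac = lam2 x • vac)
    (hvac21 : ∀ x : ℂ, T 1 0 x vac = 0)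
    (hdual11 : ∀ (x : ℂ) (y : V), vacDual (T 0 0 x y) = lam1 x * vacDual y)
    (hdual22 : ∀ (x : ℂ) (y : V), vacDual (T 1 1 x y) = lam2 x * vacDual y)
    (hdual12 : ∀ (x : ℂ) (y : V), vacDual (T 0 1 x y) = 0)
    (hnorm : vacDual vac = 1)
    (n : ℕ) (u v : Fin n → ℂ)
    (hgen : Generic c (Fin.append u v)) :
    vacDual ((opProd (T 1 0) u Finset.univ * opProd (T 0 1) v Finset.univ) vac)
      = ∑ sU : Finset (Fin n),
          ∑ sV ∈ Finset.powersetCard sU.card (Finset.univ : Finset (Fin n)),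
            (∏ i ∈ sU, lam2 (u i)) * (∏ j ∈ sVᶜ, lam2 (v j)) *
              (∏ i ∈ sUᶜ, lam1 (u i)) * (∏ j ∈ sV, lam1 (v j)) *
              KIz c 1 (restr v sVᶜ) (restr u sUᶜ) *
              KIzBar c 1 (restr v sV) (restr u sU) *
              fSS c u sU sUᶜ * fSS c v sVᶜ sV := by
  rw [stmt1_general hYang ⟨hvac11, hvac22, hvac21⟩ (hgen.admissible hc), map_smul, hnorm,
    smul_eq_mul, mul_one]
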